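/- Let q = p^t be a prime power, n > 2, c ∈ GF(q^n) (with c ≠ 1 if p = 2), k ≥ 1, u_1, …, u_k ∈ GF(q^n) nonzero, F : GF(q^n) → GF(q^n) a PcN function with respect to c, and f_1, …, f_k : GF(q^n) → GF(q). Define H(x) = F(x) + Σ_{i=1}^k u_i·f_i(x). Then H is NOT PcN with respect to c if and only if there exist a ∈ GF(q^n), elements x ≠ y in GF(q^n), and ε_1, …, ε_k ∈ {α − c·β : α, β ∈ GF(q)} not all zero, such that (F(x+a) − c·F(x)) − (F(y+a) − c·F(y)) = −Σ_{i=1}^k u_i·ε_i and, for every i with 1 ≤ i ≤ k, (f_i(x+a) − c·f_i(x)) − (f_i(y+a) − c·f_i(y)) = ε_i. -/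

import Mathlib

open scoped Classical

/-- The number of solutions `x` of `F(x+a) - c·F(x) = b`. -/
noncomputable def cDeltaCount {K : Type*} [Field K] [Fintype K]
    (c : K) (F : K → K) (a b : K) : ℕ :=
  (Finset.univ.filter fun x => F (x + a) - c * F x = b).card

/-- The `c`-differential uniformity: the maximum of `cDeltaCount` over all `a, b`,
where `a ≠ 0` is required when `c = 1`. -/
noncomputable def cDU {K : Type*} [Field K] [Fintype K] (c : K) (F : K → K) : ℕ :=
  (Finset.univ.filter fun ab : K × K => c = 1 → ab.1 ≠ 0).sup
    fun ab => cDeltaCount c F ab.1 ab.2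

/-- `F` is perfect `c`-nonlinear. -/
def IsPcN {K : Type*} [Field K] [Fintype K] (c : K) (F : K → K) : Prop :=
  cDU c F = 1

lemma isPcN_iff {K : Type*} [Field K] [Fintype K] (c : K) (F : K → K) :
    IsPcN c F ↔ ∀ a : K, (c = 1 → a ≠ 0) → ∀ x y : K,
      F (x + a) - c * F x = F (y + a) - c * F y → x = y := by
  unfold IsPcN cDU
  constructor
  · intro h a ha x y hxy
    have h1 : cDeltaCount c F a (F (y + a) - c * F y) ≤ 1 := by
      rw [← h]
      exact Finset.le_sup (f := fun ab : K × K => cDeltaCount c F ab.1 ab.2)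
        (b := (a, F (y + a) - c * F y)) (by simpa using ha)
    unfold cDeltaCount at h1
    rw [Finset.card_le_one] at h1
    exact h1 x (by simpa using hxy) y (by simp)
  · intro h
    apply le_antisymm
    · apply Finset.sup_le
      rintro ⟨a, b⟩ hab
      have ha : c = 1 → a ≠ 0 := by simpa using hab
      unfold cDeltaCount
      rw [Finset.card_le_one]
      intro x hx y hy
      simp only [Finset.mem_filter, Finset.mem_univ, true_and] at hx hy
      exact h a ha x y (hx.trans hy.symm)
    · have h1 : 1 ≤ cDeltaCount c F 1 (F (0 + 1) - c * F 0) := by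
        unfold cDeltaCount
        rw [Nat.one_le_iff_ne_zero, Finset.card_ne_zero]
        exact ⟨0, by simp⟩
      exact h1.trans (Finset.le_sup (f := fun ab : K × K => cDeltaCount c F ab.1 ab.2)
        (b := (1, F (0 + 1) - c * F 0)) (by simp))

theorem statement1 (p t n : ℕ) (hp : p.Prime) (ht : 1 ≤ t) (hn : 2 < n)
    (K : Type*) [Field K] [Fintype K] (hK : Nat.card K = (p ^ t) ^ n)
    (Fq : Subfield K) (hFq : Nat.card Fq = p ^ t)
    (c : K) (hc : p = 2 → c ≠ 1)
    (k : ℕ) (hk : 1 ≤ k)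
    (u : Fin k → K) (hu : ∀ i, u i ≠ 0)
    (F : K → K) (hF : IsPcN c F)
    (f : Fin k → K → Fq) :
    ¬ IsPcN c (fun x => F x + ∑ i, u i * (f i x : K)) ↔
      ∃ (a x y : K) (ε : Fin k → K), x ≠ y ∧
        (∀ i, ∃ α β : Fq, ε i = (α : K) - c * (β : K)) ∧
        (∃ i, ε i ≠ 0) ∧
        (F (x + a) - c * F x) - (F (y + a) - c * F y) = -(∑ i, u i * ε i) ∧
        (∀ i, ((f i (x + a) : K) - c * (f i x : K)) -
            ((f i (y + a) : K) - c * (f i y : K)) = ε i) := by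
  have key : ∀ a x y : K,
      ((F (x + a) + ∑ i, u i * (f i (x + a) : K)) - c * (F x + ∑ i, u i * (f i x : K))) -
      ((F (y + a) + ∑ i, u i * (f i (y + a) : K)) - c * (F y + ∑ i, u i * (f i y : K))) =
      ((F (x + a) - c * F x) - (F (y + a) - c * F y)) +
      ∑ i, u i * (((f i (x + a) : K) - c * (f i x : K)) -
            ((f i (y + a) : K) - c * (f i y : K))) := by
    intro a x y
    have : ∑ i, u i * (((f i (x + a) : K) - c * (f i x : K)) -
            ((f i (y + a) : K) - c * (f i y : K))) =
        (∑ i, u i * (f i (x + a) : K) - c * ∑ i, u i * (f i x : K)) -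
        (∑ i, u i * (f i (y + a) : K) - c * ∑ i, u i * (f i y : K)) := by
      simp only [Finset.mul_sum, ← Finset.sum_sub_distrib]
      exact Finset.sum_congr rfl fun i _ => by ring
    rw [this]
    ring
  rw [isPcN_iff] at hF ⊢
  constructor
  · intro h
    push Not at h
    obtain ⟨a, ha, x, y, hxy, hne⟩ := h
    have hk0 := key a x y
    rw [sub_eq_zero.mpr hxy] at hk0
    refine ⟨a, x, y, fun i => ((f i (x + a) : K) - c * (f i x : K)) -
            ((f i (y + a) : K) - c * (f i y : K)), hne, ?_, ?_, ?_, fun i => rfl⟩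
    · intro i
      refine ⟨f i (x + a) - f i (y + a), f i x - f i y, ?_⟩
      push_cast
      ring
    · by_contra hz
      push Not at hz
      apply hne
      apply hF a ha
      simp only [hz, mul_zero, Finset.sum_const_zero, add_zero] at hk0
      exact sub_eq_zero.mp hk0.symm
    · exact eq_neg_of_add_eq_zero_left hk0.symm
  · rintro ⟨a, x, y, ε, hne, -, ⟨j, hj⟩, hFe, hf⟩ h
    apply hne
    apply h a
    · rintro rfl rfl
      apply hj
      rw [← hf j]
      simp
    · apply sub_eq_zero.mp
      have hk0 := key a x y
      simp only [hf, hFe] at hk0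
      rw [neg_add_cancel] at hk0
      exact hk0
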